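/- Let k be a positive integer. Then there exist real numbers a₀, a₁, …, a_k with |a_t| ≤ (k/2 + 1)⁴ for every t, such that for all y ∈ ℝ, y = Σ_{t=0}^{k} a_t [ σ_k(y + t − ⌊k/2⌋) + (−1)ᵏ σ_k(−y − t + ⌊k/2⌋) ]. -/

import Mathlib

/-!
For `k ≥ 1` the bracket `σ_k(x) + (-1)^k σ_k(-x)` is just `x ^ k`, so the claim is that
`y = ∑ t, a t * (y + s t) ^ k` at the nodes `s t = t - ⌊k/2⌋`. Lagrange interpolation at these
`k + 1` nodes reproduces the degree `k` polynomial `(X + y) ^ k`; comparing coefficients of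
`X ^ (k - 1)` gives `k * y = ∑ t, (s t + y) ^ k * c t`, where `c t` is the coefficient of
`X ^ (k - 1)` in the `t`-th Lagrange basis polynomial. Hence `a t = c t / k` works.

Up to sign, `c t` is `(∑ j ≠ t, s j) / ∏ j ≠ t, (s t - s j)`. The factors of the denominator are
nonzero integers, and `|s j| ≤ k / 2 + 1`, so already `|a t| ≤ k / 2 + 1`.
-/

/-- The ReLU^k activation function: `σ_k(x) = x^k` for `x ≥ 0` and `0` for `x < 0`. -/
noncomputable def relupow (k : ℕ) (x : ℝ) : ℝ := if 0 ≤ x then x ^ k else 0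

open Polynomial in
/-- Interpolating `(X + y) ^ k` at `k + 1` distinct nodes and reading off the coefficient of
`X ^ (k - 1)`. -/
lemma mul_eq_sum_pow_mul_coeff_basis (k : ℕ) (hk : 0 < k) (s : Fin (k + 1) → ℝ)
    (hs : Function.Injective s) (y : ℝ) :
    (k : ℝ) * y =
      ∑ t, (s t + y) ^ k * (Lagrange.basis Finset.univ s t).coeff (k - 1) := by
  have hdeg : ((X + C y : ℝ[X]) ^ k).degree < (Finset.univ : Finset (Fin (k + 1))).card := by
    rw [degree_pow, degree_X_add_C, Finset.card_univ, Fintype.card_fin, nsmul_one]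
    exact_mod_cast Nat.lt_succ_self k
  have h := congrArg (fun p : ℝ[X] => p.coeff (k - 1))
    (Lagrange.eq_interpolate (s := Finset.univ) (v := s) hs.injOn hdeg)
  simp only [Lagrange.interpolate_apply, finsetSum_coeff, coeff_C_mul, coeff_X_add_C_pow,
    eval_pow, eval_add, eval_X, eval_C] at h
  rw [← h, Nat.sub_sub_self hk, pow_one, Nat.choose_symm hk, Nat.choose_one_right, mul_comm]

open Polynomial in
/-- For nodes in `[-M, M]` at mutual distance at least `1`, the coefficient of `X ^ (k - 1)` in a
Lagrange basis polynomial of degree `k` is at most `k * M` in absolute value. -/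
lemma abs_coeff_basis_le (k : ℕ) (hk : 0 < k) (s : Fin (k + 1) → ℝ) (M : ℝ)
    (hM : ∀ j, |s j| ≤ M) (hsep : ∀ i j, i ≠ j → 1 ≤ |s i - s j|) (t : Fin (k + 1)) :
    |(Lagrange.basis Finset.univ s t).coeff (k - 1)| ≤ k * M := by
  have hcard : (Finset.univ.erase t).card = k := by
    simp [Finset.card_erase_of_mem]
  have hcoeff := prod_X_sub_C_coeff_card_pred (Finset.univ.erase t) s (by omega)
  rw [hcard] at hcoeff
  simp only [Lagrange.basis, Lagrange.basisDivisor]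
  rw [Finset.prod_mul_distrib, ← map_prod, coeff_C_mul, hcoeff, abs_mul, abs_neg, Finset.abs_prod]
  have h1 : ∏ j ∈ Finset.univ.erase t, |(s t - s j)⁻¹| ≤ 1 := by
    refine Finset.prod_le_one (fun _ _ => abs_nonneg _) fun j hj => ?_
    rw [abs_inv]
    exact inv_le_one_of_one_le₀ (hsep t j (Finset.ne_of_mem_erase hj).symm)
  have h2 : |∑ j ∈ Finset.univ.erase t, s j| ≤ k * M := by
    refine (Finset.abs_sum_le_sum_abs _ _).trans ?_
    refine (Finset.sum_le_card_nsmul _ _ M fun j _ => hM j).trans ?_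
    rw [hcard, nsmul_eq_mul]
  exact (mul_le_of_le_one_left (abs_nonneg _) h1).trans h2

lemma relupow_add_neg (k : ℕ) (hk : 0 < k) (x : ℝ) :
    relupow k x + (-1) ^ k * relupow k (-x) = x ^ k := by
  unfold relupow
  rcases lt_trichotomy x 0 with h | rfl | h
  · rw [if_neg (not_le.2 h), if_pos (by linarith), ← mul_pow]
    simp
  · simp [hk.ne']
  · rw [if_pos h.le, if_neg (by linarith)]
    simp

/-- for every positive integer `k` there are coefficients
`a₀, …, a_k` with `|a_t| ≤ (k/2 + 1)⁴` such that for all `y ∈ ℝ`,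
`y = Σ_{t=0}^k a_t [σ_k(y + t − ⌊k/2⌋) + (−1)^k σ_k(−y − t + ⌊k/2⌋)]`. -/
theorem identity_as_relupow_combination (k : ℕ) (hk : 0 < k) :
    ∃ a : Fin (k + 1) → ℝ,
      (∀ t, |a t| ≤ ((k : ℝ) / 2 + 1) ^ 4) ∧
      ∀ y : ℝ,
        y = ∑ t : Fin (k + 1), a t *
          (relupow k (y + ((t : ℕ) : ℝ) - ((k / 2 : ℕ) : ℝ)) +
            (-1) ^ k * relupow k (-y - ((t : ℕ) : ℝ) + ((k / 2 : ℕ) : ℝ))) := by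
  set s : Fin (k + 1) → ℝ := fun t => ((t : ℕ) : ℝ) - ((k / 2 : ℕ) : ℝ) with hs
  have hk' : (0 : ℝ) < k := by exact_mod_cast hk
  have hsep : ∀ i j, i ≠ j → 1 ≤ |s i - s j| := by
    intro i j hij
    have hne : (i : ℤ) - (j : ℤ) ≠ 0 := by
      have := Fin.val_ne_of_ne hij
      omega
    have h : (1 : ℝ) ≤ |(((i : ℤ) - (j : ℤ) : ℤ) : ℝ)| := by
      exact_mod_cast Int.one_le_abs hne
    simpa [hs] using h
  have hinj : Function.Injective s := by
    intro i j hij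
    by_contra hne
    have := hsep i j hne
    rw [hij, sub_self, abs_zero] at this
    linarith
  have hM : ∀ j, |s j| ≤ (k : ℝ) / 2 + 1 := by
    intro j
    have h1 : ((j : ℕ) : ℝ) ≤ k := by exact_mod_cast Nat.lt_succ_iff.1 j.2
    have h2 : (k : ℝ) ≤ 2 * ((k / 2 : ℕ) : ℝ) + 1 := by
      exact_mod_cast (by omega : k ≤ 2 * (k / 2) + 1)
    have h3 : 2 * ((k / 2 : ℕ) : ℝ) ≤ k := by
      exact_mod_cast (by omega : 2 * (k / 2) ≤ k)
    have h4 : (0 : ℝ) ≤ ((j : ℕ) : ℝ) := Nat.cast_nonneg _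
    rw [abs_le]
    constructor <;> simp only [hs] <;> linarith
  refine ⟨fun t => (Lagrange.basis Finset.univ s t).coeff (k - 1) / k, fun t => ?_, fun y => ?_⟩
  · have h := abs_coeff_basis_le k hk s _ hM hsep t
    rw [abs_div, Nat.abs_cast, div_le_iff₀ hk']
    have hpow : (k : ℝ) / 2 + 1 ≤ ((k : ℝ) / 2 + 1) ^ 4 :=
      le_self_pow₀ (by linarith) (by norm_num)
    nlinarith
  · have h := mul_eq_sum_pow_mul_coeff_basis k hk s hinj y
    rw [← mul_right_inj' hk'.ne', h, Finset.mul_sum]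
    refine Finset.sum_congr rfl fun t _ => ?_
    have e1 : y + ((t : ℕ) : ℝ) - ((k / 2 : ℕ) : ℝ) = s t + y := by simp only [hs]; ring
    have e2 : -y - ((t : ℕ) : ℝ) + ((k / 2 : ℕ) : ℝ) = -(s t + y) := by simp only [hs]; ring
    rw [e1, e2, relupow_add_neg k hk]
    field_simp
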